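/- arXiv:2311.08914 — 5 statements merged into one kernel-verified Lean document; each statement's English description precedes it below -/
import Mathlib

section
/- Rayleigh-quotient bound at the updated point: let θ, h ∈ E, let M ≥ 2ρ, let r* ≥ 0, and let U : E → E be a continuous linear map such that ⟨U w, w⟩ ≤ (M/2)·r*·‖w‖² for all w ∈ E. Then for every unit vector v ∈ E, ⟨∇²f(θ + h) v, v⟩ ≤ ‖∇²f(θ) − U‖ + M·‖h‖ + M·|r* − ‖h‖|, where ‖·‖ on operators denotes the operator norm. -/
open scoped RealInnerProductSpace

/-!
Telescoping `∇²f(θ + h) = (∇²f(θ + h) - ∇²f(θ)) + (∇²f(θ) - U) + U`, the quadratic form of each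
difference is at most its operator norm. The Lipschitz condition bounds the first norm by
`ρ‖h‖ ≤ (M/2)‖h‖`, and `r* ≤ ‖h‖ + |r* - ‖h‖|` contributes the other `(M/2)‖h‖`.
-/

section

open ContinuousLinearMap

variable {𝕜 E : Type*} [RCLike 𝕜] [SeminormedAddCommGroup E] [InnerProductSpace 𝕜 E]

theorem reApplyInnerSelf_le_opNorm_mul_sq (T : E →L[𝕜] E) (x : E) :
    T.reApplyInnerSelf x ≤ ‖T‖ * ‖x‖ ^ 2 :=
  calc
    T.reApplyInnerSelf x ≤ ‖T x‖ * ‖x‖ := re_inner_le_norm (T x) x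
    _ ≤ ‖T‖ * ‖x‖ * ‖x‖ := by gcongr; exact T.le_opNorm x
    _ = ‖T‖ * ‖x‖ ^ 2 := by ring

theorem reApplyInnerSelf_sub (S T : E →L[𝕜] E) (x : E) :
    (S - T).reApplyInnerSelf x = S.reApplyInnerSelf x - T.reApplyInnerSelf x := by
  simp only [reApplyInnerSelf_apply, sub_apply, inner_sub_left, map_sub]

theorem reApplyInnerSelf_le_opNorm_sub_mul_sq_add (S T : E →L[𝕜] E) (x : E) :
    S.reApplyInnerSelf x ≤ ‖S - T‖ * ‖x‖ ^ 2 + T.reApplyInnerSelf x := by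
  rw [← sub_le_iff_le_add, ← reApplyInnerSelf_sub]
  exact reApplyInnerSelf_le_opNorm_mul_sq (S - T) x

theorem rayleigh_bound_at_updated_point_general
    {H : E → E →L[𝕜] E} {θ h : E} {ρ M r : ℝ}
    (hLip : ‖H (θ + h) - H θ‖ ≤ ρ * ‖h‖) (hM₀ : 0 ≤ M) (hM : 2 * ρ ≤ M)
    {U : E →L[𝕜] E} {v : E} (hU : U.reApplyInnerSelf v ≤ M / 2 * r * ‖v‖ ^ 2) :
    (H (θ + h)).reApplyInnerSelf v ≤
      (‖H θ - U‖ + M * ‖h‖ + M / 2 * |r - ‖h‖|) * ‖v‖ ^ 2 := by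
  have hdrift : ‖H (θ + h) - H θ‖ ≤ M / 2 * ‖h‖ :=
    hLip.trans (by gcongr; linarith)
  have hradius : M / 2 * r ≤ M / 2 * (‖h‖ + |r - ‖h‖|) := by
    gcongr
    linarith [le_abs_self (r - ‖h‖)]
  calc
    (H (θ + h)).reApplyInnerSelf v
      ≤ ‖H (θ + h) - H θ‖ * ‖v‖ ^ 2 + (H θ).reApplyInnerSelf v :=
        reApplyInnerSelf_le_opNorm_sub_mul_sq_add _ _ v
    _ ≤ ‖H (θ + h) - H θ‖ * ‖v‖ ^ 2 + (‖H θ - U‖ * ‖v‖ ^ 2 + U.reApplyInnerSelf v) := by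
        gcongr
        exact reApplyInnerSelf_le_opNorm_sub_mul_sq_add _ _ v
    _ ≤ M / 2 * ‖h‖ * ‖v‖ ^ 2 +
          (‖H θ - U‖ * ‖v‖ ^ 2 + M / 2 * (‖h‖ + |r - ‖h‖|) * ‖v‖ ^ 2) := by
        gcongr
        exact hU.trans (by gcongr)
    _ = (‖H θ - U‖ + M * ‖h‖ + M / 2 * |r - ‖h‖|) * ‖v‖ ^ 2 := by ring

end

/-- Rayleigh-quotient bound at the updated point: if `M ≥ 2ρ`, `r* ≥ 0`,
and `⟨U w, w⟩ ≤ (M/2)·r*·‖w‖²` for all `w`, then for every unit vector `v`,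
`⟨∇²f(θ + h) v, v⟩ ≤ ‖∇²f(θ) − U‖ + M·‖h‖ + M·|r* − ‖h‖|`. -/
theorem rayleigh_bound_at_updated_point
    (d : ℕ) (hd : 1 ≤ d)
    (f : EuclideanSpace ℝ (Fin d) → ℝ) (hf : ContDiff ℝ 2 f)
    (ρ : ℝ) (hρ : 0 < ρ)
    (hLip : ∀ x y : EuclideanSpace ℝ (Fin d),
      ‖fderiv ℝ (gradient f) x - fderiv ℝ (gradient f) y‖ ≤ ρ * ‖x - y‖)
    (θ h : EuclideanSpace ℝ (Fin d))
    (M : ℝ) (hM : 2 * ρ ≤ M)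
    (rstar : ℝ) (hrstar : 0 ≤ rstar)
    (U : EuclideanSpace ℝ (Fin d) →L[ℝ] EuclideanSpace ℝ (Fin d))
    (hU : ∀ w : EuclideanSpace ℝ (Fin d), ⟪U w, w⟫ ≤ M / 2 * rstar * ‖w‖ ^ 2) :
    ∀ v : EuclideanSpace ℝ (Fin d), ‖v‖ = 1 →
      ⟪(fderiv ℝ (gradient f) (θ + h)) v, v⟫ ≤
        ‖fderiv ℝ (gradient f) θ - U‖ + M * ‖h‖ + M * |rstar - ‖h‖| := by
  have hM₀ : 0 ≤ M := by linarith
  exact fun v hv ↦ (rayleigh_bound_at_updated_point_general (H := fderiv ℝ (gradient f))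
    (by simpa using hLip (θ + h) θ) hM₀ hM (hU v)).trans
      (by rw [hv, one_pow, mul_one]; gcongr; exact half_le_self hM₀)
end

section
/- Cubed largest-eigenvalue bound at the updated point: under the same hypotheses (M ≥ 2ρ, r* ≥ 0, and ⟨U w, w⟩ ≤ (M/2)·r*·‖w‖² for all w ∈ E), one has ρ^{−3/2}·(sup_{‖v‖=1} ⟨∇²f(θ + h) v, v⟩)³ ≤ 9·ρ^{−3/2}·( ‖∇²f(θ) − U‖³ + M³·‖h‖³ + M³·|r* − ‖h‖|³ ). -/
open scoped RealInnerProductSpace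

/-! The largest eigenvalue is 1-Lipschitz in operator norm (Weyl), so passing from `∇²f(θ + h)` to
`∇²f(θ)` to `U` gives
`λ_max(∇²f(θ + h)) ≤ ρ‖h‖ + ‖∇²f(θ) - U‖ + (M/2) r* ≤ ‖∇²f(θ) - U‖ + M‖h‖ + M|r* - ‖h‖|`,
using `ρ ≤ M/2` and `r* ≤ ‖h‖ + |r* - ‖h‖|`. The factor `9 = 3²` comes from cubing: the cube of a
sum of three nonnegative terms is at most `9` times the sum of their cubes. -/

section RayleighSup

variable {E : Type*} [NormedAddCommGroup E] [InnerProductSpace ℝ E]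

/-- The supremum of the quadratic form of `T` over the unit sphere. For a symmetric operator on a
nontrivial finite-dimensional space this is the largest eigenvalue `λ_max(T)`; on the trivial space
the sphere is empty and the value is `0`. -/
noncomputable def rayleighSup (T : E →L[ℝ] E) : ℝ :=
  sSup {x : ℝ | ∃ v : E, ‖v‖ = 1 ∧ x = ⟪T v, v⟫}

theorem real_inner_apply_self_le_opNorm (T : E →L[ℝ] E) {v : E} (hv : ‖v‖ = 1) :
    ⟪T v, v⟫ ≤ ‖T‖ :=
  calc
    ⟪T v, v⟫ ≤ ‖T v‖ * ‖v‖ := real_inner_le_norm _ _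
    _ = ‖T v‖ := by rw [hv, mul_one]
    _ ≤ ‖T‖ := T.unit_le_opNorm v hv.le

theorem real_inner_apply_self_le_rayleighSup (T : E →L[ℝ] E) {v : E} (hv : ‖v‖ = 1) :
    ⟪T v, v⟫ ≤ rayleighSup T := by
  refine le_csSup ⟨‖T‖, ?_⟩ ⟨v, hv, rfl⟩
  rintro _ ⟨w, hw, rfl⟩
  exact real_inner_apply_self_le_opNorm T hw

variable [Nontrivial E]

theorem rayleighSup_le {T : E →L[ℝ] E} {c : ℝ} (hT : ∀ v : E, ‖v‖ = 1 → ⟪T v, v⟫ ≤ c) :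
    rayleighSup T ≤ c := by
  obtain ⟨u, hu⟩ := exists_norm_eq E zero_le_one
  refine csSup_le ⟨_, u, hu, rfl⟩ ?_
  rintro _ ⟨v, hv, rfl⟩
  exact hT v hv

theorem rayleighSup_le_norm_sub_add_rayleighSup (S T : E →L[ℝ] E) :
    rayleighSup S ≤ ‖S - T‖ + rayleighSup T := by
  refine rayleighSup_le fun v hv ↦ ?_
  calc
    ⟪S v, v⟫ = ⟪(S - T) v, v⟫ + ⟪T v, v⟫ := by
      rw [← inner_add_left, sub_apply, sub_add_cancel]
    _ ≤ ‖S - T‖ + rayleighSup T :=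
      add_le_add (real_inner_apply_self_le_opNorm _ hv) (real_inner_apply_self_le_rayleighSup T hv)

theorem rayleighSup_le_norm_sub_add_mul_add_mul {A B U : E →L[ℝ] E} {ρ M r t : ℝ}
    (hM₀ : 0 ≤ M) (hM : 2 * ρ ≤ M) (ht : 0 ≤ t) (hAB : ‖B - A‖ ≤ ρ * t)
    (hU : rayleighSup U ≤ M / 2 * r) :
    rayleighSup B ≤ ‖A - U‖ + M * t + M * |r - t| := by
  have hr : r ≤ t + |r - t| := by linarith [le_abs_self (r - t)]
  calc
    rayleighSup B ≤ ‖B - A‖ + rayleighSup A := rayleighSup_le_norm_sub_add_rayleighSup B A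
    _ ≤ ‖B - A‖ + (‖A - U‖ + rayleighSup U) := by
      gcongr
      exact rayleighSup_le_norm_sub_add_rayleighSup A U
    _ ≤ M / 2 * t + (‖A - U‖ + M / 2 * (t + |r - t|)) := by
      gcongr
      · exact hAB.trans (by gcongr; linarith)
      · exact hU.trans (by gcongr)
    _ = ‖A - U‖ + M * t + M / 2 * |r - t| := by ring
    _ ≤ ‖A - U‖ + M * t + M * |r - t| := by
      gcongr
      exact half_le_self hM₀

end RayleighSup

theorem add_add_pow_succ_le {K : Type*} [Semiring K] [LinearOrder K] [IsStrictOrderedRing K]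
    [ExistsAddOfLE K] {a b c : K} (ha : 0 ≤ a) (hb : 0 ≤ b) (hc : 0 ≤ c) (n : ℕ) :
    (a + b + c) ^ (n + 1) ≤ 3 ^ n * (a ^ (n + 1) + b ^ (n + 1) + c ^ (n + 1)) := by
  have nonneg : ∀ i ∈ Finset.univ, 0 ≤ ![a, b, c] i := by
    simp [Fin.forall_fin_succ, ha, hb, hc]
  simpa [Fin.sum_univ_three] using pow_sum_le_card_mul_sum_pow nonneg n

theorem lambda_max_cubed_bound_at_updated_point_general {E : Type*} [NormedAddCommGroup E]
    [InnerProductSpace ℝ E] [Nontrivial E] {H : E → E →L[ℝ] E} {U : E →L[ℝ] E} {θ h : E}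
    {ρ M rstar : ℝ} (hρ : 0 < ρ) (hH : ‖H (θ + h) - H θ‖ ≤ ρ * ‖h‖) (hM : 2 * ρ ≤ M)
    (hU : ∀ w : E, ⟪U w, w⟫ ≤ M / 2 * rstar * ‖w‖ ^ 2) :
    ρ ^ (-(3 : ℝ) / 2) * rayleighSup (H (θ + h)) ^ 3 ≤
      9 * ρ ^ (-(3 : ℝ) / 2) *
        (‖H θ - U‖ ^ 3 + M ^ 3 * ‖h‖ ^ 3 + M ^ 3 * |rstar - ‖h‖| ^ 3) := by
  have hM₀ : 0 ≤ M := by linarith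
  have hUsup : rayleighSup U ≤ M / 2 * rstar :=
    rayleighSup_le fun v hv ↦ by simpa [hv] using hU v
  have hsup : rayleighSup (H (θ + h)) ≤ ‖H θ - U‖ + M * ‖h‖ + M * |rstar - ‖h‖| :=
    rayleighSup_le_norm_sub_add_mul_add_mul hM₀ hM (norm_nonneg h) hH hUsup
  have hcube : rayleighSup (H (θ + h)) ^ 3 ≤
      3 ^ 2 * (‖H θ - U‖ ^ 3 + (M * ‖h‖) ^ 3 + (M * |rstar - ‖h‖|) ^ 3) :=
    ((Odd.pow_le_pow (by decide)).2 hsup).trans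
      (add_add_pow_succ_le (by positivity) (by positivity) (by positivity) 2)
  calc
    ρ ^ (-(3 : ℝ) / 2) * rayleighSup (H (θ + h)) ^ 3
      ≤ ρ ^ (-(3 : ℝ) / 2) *
          (3 ^ 2 * (‖H θ - U‖ ^ 3 + (M * ‖h‖) ^ 3 + (M * |rstar - ‖h‖|) ^ 3)) := by gcongr
    _ = _ := by ring

/-- Cubed largest-eigenvalue bound at the updated point: if `M ≥ 2ρ`,
`r* ≥ 0`, and `⟨U w, w⟩ ≤ (M/2)·r*·‖w‖²` for all `w`, then
`ρ^{−3/2}·(sup_{‖v‖=1} ⟨∇²f(θ+h) v, v⟩)³ ≤ 9·ρ^{−3/2}·(‖∇²f(θ) − U‖³ + M³·‖h‖³ + M³·|r* − ‖h‖|³)`. -/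
theorem lambda_max_cubed_bound_at_updated_point
    (d : ℕ) (hd : 1 ≤ d)
    (f : EuclideanSpace ℝ (Fin d) → ℝ) (hf : ContDiff ℝ 2 f)
    (ρ : ℝ) (hρ : 0 < ρ)
    (hLip : ∀ x y : EuclideanSpace ℝ (Fin d),
      ‖fderiv ℝ (gradient f) x - fderiv ℝ (gradient f) y‖ ≤ ρ * ‖x - y‖)
    (θ h : EuclideanSpace ℝ (Fin d))
    (M : ℝ) (hM : 2 * ρ ≤ M)
    (rstar : ℝ) (hrstar : 0 ≤ rstar)
    (U : EuclideanSpace ℝ (Fin d) →L[ℝ] EuclideanSpace ℝ (Fin d))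
    (hU : ∀ w : EuclideanSpace ℝ (Fin d), ⟪U w, w⟫ ≤ M / 2 * rstar * ‖w‖ ^ 2) :
    ρ ^ (-(3 : ℝ) / 2) *
        (sSup {x : ℝ | ∃ v : EuclideanSpace ℝ (Fin d), ‖v‖ = 1 ∧
            x = ⟪(fderiv ℝ (gradient f) (θ + h)) v, v⟫}) ^ 3 ≤
      9 * ρ ^ (-(3 : ℝ) / 2) *
        (‖fderiv ℝ (gradient f) θ - U‖ ^ 3 + M ^ 3 * ‖h‖ ^ 3 +
          M ^ 3 * |rstar - ‖h‖| ^ 3) := by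
  have : Nonempty (Fin d) := Fin.pos_iff_nonempty.mp hd
  exact lambda_max_cubed_bound_at_updated_point_general hρ (by simpa using hLip (θ + h) θ) hM hU
end

section
/- Gradient-norm bound at the updated point: let θ, h, v ∈ E, let U : E → E be a continuous linear map, let M ≥ 2ρ, and define the model gradient g_m = v + U h − (M/2)·‖h‖·h. Then ‖∇f(θ + h)‖ ≤ ‖∇f(θ) − v‖ + (1/M)·‖∇²f(θ) − U‖² + ‖g_m‖ + M·‖h‖². -/
open scoped RealInnerProductSpace

/-!
The defining equation of the model gradient splits `∇f(θ + h)` into the first-order Taylor remainder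
of `∇f` at `θ`, the gradient error `∇f(θ) - v`, the Hessian error `(∇²f(θ) - U) h`, the model
gradient `g_m` and the cubic term `(M / 2) ‖h‖ h`. The Lipschitz Hessian bounds the remainder by
`(ρ / 2) ‖h‖² ≤ (M / 4) ‖h‖²`, Young's inequality bounds the Hessian error by
`(1 / M) ‖∇²f(θ) - U‖² + (M / 4) ‖h‖²`, and the cubic term contributes the remaining
`(M / 2) ‖h‖²`.
-/

section TaylorRemainder

open Set AffineMap

variable {E F : Type*} [NormedAddCommGroup E] [NormedSpace ℝ E]
  [NormedAddCommGroup F] [NormedSpace ℝ F]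

theorem norm_image_sub_sub_smul_le_of_norm_deriv_right_sub_le {f f' : ℝ → F} {a b C : ℝ} {v : F}
    (hf : ContinuousOn f (Icc a b))
    (hf' : ∀ t ∈ Ico a b, HasDerivWithinAt f (f' t) (Ici t) t)
    (bound : ∀ t ∈ Ico a b, ‖f' t - v‖ ≤ C * (t - a)) {x : ℝ} (hx : x ∈ Icc a b) :
    ‖f x - f a - (x - a) • v‖ ≤ C / 2 * (x - a) ^ 2 := by
  have hasDeriv_linear (t : ℝ) : HasDerivAt (fun t ↦ (t - a) • v) v t := by
    simpa only [one_smul] using ((hasDerivAt_id' t).sub_const a).smul_const v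
  have hasDeriv_quadratic (t : ℝ) :
      HasDerivAt (fun t ↦ C / 2 * (t - a) ^ 2) (C * (t - a)) t := by
    refine ((((hasDerivAt_id' t).sub_const a).pow 2).const_mul (C / 2)).congr_deriv ?_
    ring
  exact image_norm_le_of_norm_deriv_right_le_deriv_boundary
    (f := fun t ↦ f t - f a - (t - a) • v)
    ((hf.sub continuousOn_const).sub (by fun_prop))
    (fun t ht ↦ ((hf' t ht).sub_const (f a)).sub (hasDeriv_linear t).hasDerivWithinAt)
    (by simp) hasDeriv_quadratic bound hx

theorem norm_image_sub_sub_le_of_norm_hasFDerivWithinAt_sub_le {g : E → F} {g' : E → E →L[ℝ] F}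
    {x y : E} {ρ : ℝ} (hg : ∀ z ∈ segment ℝ x y, HasFDerivWithinAt g (g' z) (segment ℝ x y) z)
    (bound : ∀ z ∈ segment ℝ x y, ‖g' z - g' x‖ ≤ ρ * ‖z - x‖) :
    ‖g y - g x - g' x (y - x)‖ ≤ ρ / 2 * ‖y - x‖ ^ 2 := by
  have mem_segment {t : ℝ} (ht : t ∈ Icc (0 : ℝ) 1) : lineMap x y t ∈ segment ℝ x y :=
    lineMap_mem_segment ℝ x y ht
  have hasDeriv {t : ℝ} (ht : t ∈ Icc (0 : ℝ) 1) :
      HasDerivWithinAt (g ∘ lineMap x y) (g' (lineMap x y t) (y - x)) (Icc 0 1) t :=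
    (hg _ (mem_segment ht)).comp_hasDerivWithinAt t hasDerivWithinAt_lineMap
      fun _ ↦ mem_segment
  have deriv_bound {t : ℝ} (ht : t ∈ Icc (0 : ℝ) 1) :
      ‖g' (lineMap x y t) (y - x) - g' x (y - x)‖ ≤ ρ * ‖y - x‖ ^ 2 * (t - 0) :=
    calc ‖g' (lineMap x y t) (y - x) - g' x (y - x)‖
        ≤ ‖g' (lineMap x y t) - g' x‖ * ‖y - x‖ := (g' (lineMap x y t) - g' x).le_opNorm _
      _ ≤ ρ * ‖lineMap x y t - x‖ * ‖y - x‖ := by gcongr; exact bound _ (mem_segment ht)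
      _ = ρ * (t * ‖y - x‖) * ‖y - x‖ := by
        rw [← dist_eq_norm, dist_lineMap_left, dist_eq_norm', Real.norm_of_nonneg ht.1]
      _ = ρ * ‖y - x‖ ^ 2 * (t - 0) := by ring
  have remainder_bound := norm_image_sub_sub_smul_le_of_norm_deriv_right_sub_le
    (fun t ht ↦ (hasDeriv ht).continuousWithinAt)
    (fun t ht ↦ (hasDeriv (Ico_subset_Icc_self ht)).mono_of_mem_nhdsWithin
      (Icc_mem_nhdsGE_of_mem ht))
    (fun t ht ↦ deriv_bound (Ico_subset_Icc_self ht)) (right_mem_Icc.2 zero_le_one)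
  simpa [mul_div_right_comm] using remainder_bound

end TaylorRemainder

theorem contDiff_gradient {E : Type*} [NormedAddCommGroup E] [InnerProductSpace ℝ E]
    [CompleteSpace E] {f : E → ℝ} {m n : WithTop ℕ∞} (hf : ContDiff ℝ n f) (hmn : m + 1 ≤ n) :
    ContDiff ℝ m (gradient f) :=
  (InnerProductSpace.toDual ℝ E).symm.contDiff.comp (hf.fderiv_right hmn)

theorem gradient_norm_bound_at_updated_point_general
    {E : Type*} [NormedAddCommGroup E] [NormedSpace ℝ E]
    {g : E → E} {g' : E → E →L[ℝ] E} {θ h v gm : E} {U : E →L[ℝ] E} {ρ M : ℝ}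
    (hg : ∀ z ∈ segment ℝ θ (θ + h), HasFDerivWithinAt g (g' z) (segment ℝ θ (θ + h)) z)
    (bound : ∀ z ∈ segment ℝ θ (θ + h), ‖g' z - g' θ‖ ≤ ρ * ‖z - θ‖)
    (hM_pos : 0 < M) (hM : 2 * ρ ≤ M) (hgm : gm = v + U h - (M / 2 * ‖h‖) • h) :
    ‖g (θ + h)‖ ≤ ‖g θ - v‖ + (1 / M) * ‖g' θ - U‖ ^ 2 + ‖gm‖ + M * ‖h‖ ^ 2 := by
  set R := g (θ + h) - g θ - g' θ h with hR
  have decomposition :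
      g (θ + h) = R + (g θ - v) + (g' θ - U) h + gm + (M / 2 * ‖h‖) • h := by
    rw [hR, hgm, sub_apply]
    abel
  have remainder_bound : ‖R‖ ≤ M / 4 * ‖h‖ ^ 2 :=
    calc ‖R‖ ≤ ρ / 2 * ‖h‖ ^ 2 := by
          simpa only [add_sub_cancel_left] using
            norm_image_sub_sub_le_of_norm_hasFDerivWithinAt_sub_le hg bound
      _ ≤ M / 4 * ‖h‖ ^ 2 := by gcongr ?_ * _; linarith
  have hessian_error_bound : ‖(g' θ - U) h‖ ≤ 1 / M * ‖g' θ - U‖ ^ 2 + M / 4 * ‖h‖ ^ 2 := by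
    have young := two_mul_le_add_mul_sq (a := ‖g' θ - U‖) (b := ‖h‖) (ε := 2 / M) (by positivity)
    calc ‖(g' θ - U) h‖ ≤ ‖g' θ - U‖ * ‖h‖ := (g' θ - U).le_opNorm h
      _ ≤ (2 / M * ‖g' θ - U‖ ^ 2 + (2 / M)⁻¹ * ‖h‖ ^ 2) / 2 := by linarith
      _ = 1 / M * ‖g' θ - U‖ ^ 2 + M / 4 * ‖h‖ ^ 2 := by rw [inv_div]; ring
  have cubic_term_norm : ‖(M / 2 * ‖h‖) • h‖ = M / 2 * ‖h‖ ^ 2 := by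
    rw [norm_smul, Real.norm_of_nonneg (by positivity)]
    ring
  calc ‖g (θ + h)‖
      ≤ ‖R‖ + ‖g θ - v‖ + ‖(g' θ - U) h‖ + ‖gm‖ + ‖(M / 2 * ‖h‖) • h‖ := by
        rw [decomposition]
        exact norm_add_le_of_le norm_add₄_le le_rfl
    _ ≤ ‖g θ - v‖ + (1 / M) * ‖g' θ - U‖ ^ 2 + ‖gm‖ + M * ‖h‖ ^ 2 := by linarith

/-- Gradient-norm bound at the updated point: with model gradient
`g_m = v + U h − (M/2)·‖h‖·h` and `M ≥ 2ρ`,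
`‖∇f(θ + h)‖ ≤ ‖∇f(θ) − v‖ + (1/M)·‖∇²f(θ) − U‖² + ‖g_m‖ + M·‖h‖²`. -/
theorem gradient_norm_bound_at_updated_point
    (d : ℕ) (hd : 1 ≤ d)
    (f : EuclideanSpace ℝ (Fin d) → ℝ) (hf : ContDiff ℝ 2 f)
    (ρ : ℝ) (hρ : 0 < ρ)
    (hLip : ∀ x y : EuclideanSpace ℝ (Fin d),
      ‖fderiv ℝ (gradient f) x - fderiv ℝ (gradient f) y‖ ≤ ρ * ‖x - y‖)
    (θ h v : EuclideanSpace ℝ (Fin d))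
    (U : EuclideanSpace ℝ (Fin d) →L[ℝ] EuclideanSpace ℝ (Fin d))
    (M : ℝ) (hM : 2 * ρ ≤ M)
    (gm : EuclideanSpace ℝ (Fin d))
    (hgm : gm = v + U h - (M / 2 * ‖h‖) • h) :
    ‖gradient f (θ + h)‖ ≤
      ‖gradient f θ - v‖ + (1 / M) * ‖fderiv ℝ (gradient f) θ - U‖ ^ 2 +
        ‖gm‖ + M * ‖h‖ ^ 2 := by
  have hdiff := (contDiff_gradient hf one_add_one_eq_two.le).differentiable one_ne_zero
  exact gradient_norm_bound_at_updated_point_general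
    (fun x _ ↦ (hdiff x).hasFDerivAt.hasFDerivWithinAt) (fun x _ ↦ hLip x θ) (by linarith) hM hgm
end

section
/- Power-3/2 gradient-norm bound at the updated point: under the same hypotheses (θ, h, v ∈ E, U : E → E continuous linear, M ≥ 2ρ, g_m = v + U h − (M/2)·‖h‖·h), one has ‖∇f(θ + h)‖^{3/2} ≤ 2·( ‖∇f(θ) − v‖^{3/2} + M^{−3/2}·‖∇²f(θ) − U‖³ + ‖g_m‖^{3/2} + M^{3/2}·‖h‖³ ). -/
open scoped RealInnerProductSpace

/-!
The vector `∇f(θ + h)` splits into the gradient error `∇f(θ) - v`, the Hessian error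
`(∇²f(θ) - U) h`, the model gradient `g_m`, the cubic term `(M/2)‖h‖ h` and the Taylor remainder of
`∇f`, whose norm is at most `(ρ/2)‖h‖² ≤ (M/4)‖h‖²`. Young's inequality
`ab ≤ M⁻¹a² + (M/4)b²` turns the Hessian error into `M⁻¹‖∇²f(θ) - U‖²` plus another `(M/4)‖h‖²`, so
the contributions of `‖h‖²` add up to `M‖h‖²`. Raising the resulting four-term bound to the power
`3/2` costs the factor `4^(3/2 - 1) = 2` by convexity. Throughout, a vector field `G` with
derivative `G'` takes the place of `∇f` and `∇²f`.
-/

section Taylor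

open Set AffineMap

variable {E F : Type*} [NormedAddCommGroup E] [NormedSpace ℝ E]
  [NormedAddCommGroup F] [NormedSpace ℝ F]
  {s : Set E} {f : E → F} {f' : E → E →L[ℝ] F} {x y : E} {C : ℝ}

theorem norm_image_sub_le_of_norm_hasFDerivWithin_le_mul_norm_sub (hs : StarConvex ℝ x s)
    (hf : ∀ z ∈ s, HasFDerivWithinAt f (f' z) s z) (bound : ∀ z ∈ s, ‖f' z‖ ≤ C * ‖z - x‖)
    (hy : y ∈ s) : ‖f y - f x‖ ≤ C / 2 * ‖y - x‖ ^ 2 := by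
  have hmaps : MapsTo (lineMap x y) (Icc (0 : ℝ) 1) s := fun t ht ↦ by
    rw [lineMap_apply_module', add_comm]
    exact hs.add_smul_sub_mem hy ht.1 ht.2
  have hderiv : ∀ t ∈ Icc (0 : ℝ) 1, HasDerivWithinAt (fun t : ℝ ↦ f (lineMap x y t) - f x)
      (f' (lineMap x y t) (y - x)) (Icc 0 1) t := fun t ht ↦
    ((hf _ (hmaps ht)).comp_hasDerivWithinAt t hasDerivWithinAt_lineMap hmaps).sub_const _
  have hboundary (t : ℝ) :
      HasDerivAt (fun t ↦ C / 2 * ‖y - x‖ ^ 2 * t ^ 2) (C * ‖y - x‖ ^ 2 * t) t :=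
    ((hasDerivAt_pow 2 t).const_mul (C / 2 * ‖y - x‖ ^ 2)).congr_deriv (by push_cast; ring)
  have hspeed : ∀ t ∈ Ico (0 : ℝ) 1, ‖f' (lineMap x y t) (y - x)‖ ≤ C * ‖y - x‖ ^ 2 * t := by
    intro t ht
    have hdist : ‖lineMap x y t - x‖ = t * ‖y - x‖ := by
      rw [lineMap_apply_module', add_sub_cancel_right, norm_smul, Real.norm_of_nonneg ht.1]
    calc ‖f' (lineMap x y t) (y - x)‖
        ≤ C * ‖lineMap x y t - x‖ * ‖y - x‖ :=
          (f' _).le_of_opNorm_le (bound _ (hmaps (Ico_subset_Icc_self ht))) _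
      _ = C * ‖y - x‖ ^ 2 * t := by rw [hdist]; ring
  simpa using image_norm_le_of_norm_deriv_right_le_deriv_boundary
    (fun t ht ↦ (hderiv t ht).continuousWithinAt)
    (fun t ht ↦ (hderiv t (Ico_subset_Icc_self ht)).mono_of_mem_nhdsWithin
      (Icc_mem_nhdsGE_of_mem ht))
    (by simp) hboundary hspeed (right_mem_Icc.2 zero_le_one)

theorem norm_image_sub_sub_le_of_norm_hasFDerivWithin_sub_le (hs : StarConvex ℝ x s)
    (hf : ∀ z ∈ s, HasFDerivWithinAt f (f' z) s z)
    (bound : ∀ z ∈ s, ‖f' z - f' x‖ ≤ C * ‖z - x‖) (hy : y ∈ s) :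
    ‖f y - f x - f' x (y - x)‖ ≤ C / 2 * ‖y - x‖ ^ 2 := by
  have h := norm_image_sub_le_of_norm_hasFDerivWithin_le_mul_norm_sub hs
    (fun z hz ↦ (hf z hz).sub (f' x).hasFDerivWithinAt) bound hy
  rwa [Pi.sub_apply, Pi.sub_apply, sub_sub_sub_comm, ← map_sub] at h

end Taylor

theorem add_four_rpow_le_const_mul_add_rpow {a b c d p : ℝ} (ha : 0 ≤ a) (hb : 0 ≤ b)
    (hc : 0 ≤ c) (hd : 0 ≤ d) (hp : 1 ≤ p) :
    (a + b + c + d) ^ p ≤ 4 ^ (p - 1) * (a ^ p + b ^ p + c ^ p + d ^ p) := by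
  have h := Real.rpow_sum_le_const_mul_sum_rpow_of_nonneg Finset.univ (f := ![a, b, c, d]) hp
    (by simp [Fin.forall_fin_succ, ha, hb, hc, hd])
  simpa [Fin.sum_univ_four] using h

theorem sq_rpow_div_two {x : ℝ} (hx : 0 ≤ x) (p : ℝ) : (x ^ 2) ^ (p / 2) = x ^ p := by
  rw [Real.rpow_div_two_eq_sqrt _ (sq_nonneg x), Real.sqrt_sq hx]

section CubicModel

variable {E : Type*} [NormedAddCommGroup E] [NormedSpace ℝ E]

/-- The gradient `g_m` at `h` of the cubic-regularized model
`⟪v, h⟫ + ⟪U h, h⟫ / 2 - M / 6 * ‖h‖ ^ 3`, for symmetric `U` in an inner product space. It is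
encoded by its formula, which makes sense in any normed space and keeps the paper's sign of the
cubic term. -/
noncomputable def cubicModelGradient (v : E) (U : E →L[ℝ] E) (M : ℝ) (h : E) : E :=
  v + U h - (M / 2 * ‖h‖) • h

variable {s : Set E} {G : E → E} {G' : E → E →L[ℝ] E} {θ h : E} {ρ M : ℝ}

theorem norm_add_le_norm_cubicModelGradient_add (hs : StarConvex ℝ θ s)
    (hG : ∀ x ∈ s, HasFDerivWithinAt G (G' x) s x)
    (hLip : ∀ x ∈ s, ‖G' x - G' θ‖ ≤ ρ * ‖x - θ‖) (hθh : θ + h ∈ s)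
    (hM₀ : 0 < M) (hM : 2 * ρ ≤ M) (v : E) (U : E →L[ℝ] E) :
    ‖G (θ + h)‖ ≤ ‖G θ - v‖ + M⁻¹ * ‖G' θ - U‖ ^ 2 + ‖cubicModelGradient v U M h‖
      + M * ‖h‖ ^ 2 := by
  set gm := cubicModelGradient v U M h with hgm
  set r := G (θ + h) - G θ - G' θ h
  have hsplit : G (θ + h) = (G θ - v) + (G' θ - U) h + gm + (M / 2 * ‖h‖) • h + r := by
    simp only [r, hgm, cubicModelGradient, sub_apply]
    abel
  have htaylor : ‖r‖ ≤ M / 4 * ‖h‖ ^ 2 := by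
    have hr : ‖r‖ ≤ ρ / 2 * ‖h‖ ^ 2 := by
      simpa [r] using norm_image_sub_sub_le_of_norm_hasFDerivWithin_sub_le hs hG hLip hθh
    exact hr.trans (mul_le_mul_of_nonneg_right (by linarith) (sq_nonneg _))
  have hcubic : ‖(M / 2 * ‖h‖) • h‖ = M / 2 * ‖h‖ ^ 2 := by
    rw [norm_smul, Real.norm_of_nonneg (by positivity)]
    ring
  have hhessian : ‖(G' θ - U) h‖ ≤ M⁻¹ * ‖G' θ - U‖ ^ 2 + M / 4 * ‖h‖ ^ 2 := by
    have hyoung := two_mul_le_add_mul_sq (a := ‖h‖) (b := ‖G' θ - U‖) (half_pos hM₀)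
    rw [inv_div] at hyoung
    linear_combination (G' θ - U).le_opNorm h + hyoung / 2
  calc ‖G (θ + h)‖
      ≤ ‖G θ - v‖ + ‖(G' θ - U) h‖ + ‖gm‖ + ‖(M / 2 * ‖h‖) • h‖ + ‖r‖ := by
        rw [hsplit]
        exact norm_add_le_of_le norm_add₄_le le_rfl
    _ ≤ ‖G θ - v‖ + M⁻¹ * ‖G' θ - U‖ ^ 2 + ‖gm‖ + M * ‖h‖ ^ 2 := by linarith

theorem gradient_norm_pow_bound_at_updated_point_general (hs : StarConvex ℝ θ s)
    (hG : ∀ x ∈ s, HasFDerivWithinAt G (G' x) s x)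
    (hLip : ∀ x ∈ s, ‖G' x - G' θ‖ ≤ ρ * ‖x - θ‖) (hθh : θ + h ∈ s)
    (hM₀ : 0 < M) (hM : 2 * ρ ≤ M) (v : E) (U : E →L[ℝ] E) :
    ‖G (θ + h)‖ ^ ((3 : ℝ) / 2) ≤
      2 * (‖G θ - v‖ ^ ((3 : ℝ) / 2) + M ^ (-(3 : ℝ) / 2) * ‖G' θ - U‖ ^ 3 +
        ‖cubicModelGradient v U M h‖ ^ ((3 : ℝ) / 2) + M ^ ((3 : ℝ) / 2) * ‖h‖ ^ 3) := by
  have hconst : (4 : ℝ) ^ ((3 : ℝ) / 2 - 1) = 2 := by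
    rw [show (4 : ℝ) = 2 ^ 2 by norm_num, ← Real.rpow_natCast_mul zero_le_two]
    norm_num
  have hhessian : (M⁻¹ * ‖G' θ - U‖ ^ 2) ^ ((3 : ℝ) / 2) =
      M ^ (-(3 : ℝ) / 2) * ‖G' θ - U‖ ^ 3 := by
    rw [Real.mul_rpow (by positivity) (by positivity), sq_rpow_div_two (norm_nonneg _),
      Real.rpow_ofNat, Real.inv_rpow hM₀.le, ← Real.rpow_neg hM₀.le, neg_div]
  have hcubic : (M * ‖h‖ ^ 2) ^ ((3 : ℝ) / 2) = M ^ ((3 : ℝ) / 2) * ‖h‖ ^ 3 := by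
    rw [Real.mul_rpow hM₀.le (by positivity), sq_rpow_div_two (norm_nonneg _), Real.rpow_ofNat]
  calc ‖G (θ + h)‖ ^ ((3 : ℝ) / 2)
      ≤ (‖G θ - v‖ + M⁻¹ * ‖G' θ - U‖ ^ 2 + ‖cubicModelGradient v U M h‖
          + M * ‖h‖ ^ 2) ^ ((3 : ℝ) / 2) :=
        Real.rpow_le_rpow (norm_nonneg _)
          (norm_add_le_norm_cubicModelGradient_add hs hG hLip hθh hM₀ hM v U) (by norm_num)
    _ ≤ _ := add_four_rpow_le_const_mul_add_rpow (norm_nonneg _) (by positivity) (norm_nonneg _)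
        (by positivity) (by norm_num)
    _ = _ := by rw [hconst, hhessian, hcubic]

end CubicModel

/-- Power-3/2 gradient-norm bound at the updated point: with model gradient
`g_m = v + U h − (M/2)·‖h‖·h` and `M ≥ 2ρ`,
`‖∇f(θ + h)‖^{3/2} ≤ 2·(‖∇f(θ) − v‖^{3/2} + M^{−3/2}·‖∇²f(θ) − U‖³ + ‖g_m‖^{3/2} + M^{3/2}·‖h‖³)`. -/
theorem gradient_norm_pow_bound_at_updated_point
    (d : ℕ) (hd : 1 ≤ d)
    (f : EuclideanSpace ℝ (Fin d) → ℝ) (hf : ContDiff ℝ 2 f)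
    (ρ : ℝ) (hρ : 0 < ρ)
    (hLip : ∀ x y : EuclideanSpace ℝ (Fin d),
      ‖fderiv ℝ (gradient f) x - fderiv ℝ (gradient f) y‖ ≤ ρ * ‖x - y‖)
    (θ h v : EuclideanSpace ℝ (Fin d))
    (U : EuclideanSpace ℝ (Fin d) →L[ℝ] EuclideanSpace ℝ (Fin d))
    (M : ℝ) (hM : 2 * ρ ≤ M)
    (gm : EuclideanSpace ℝ (Fin d))
    (hgm : gm = v + U h - (M / 2 * ‖h‖) • h) :
    ‖gradient f (θ + h)‖ ^ ((3 : ℝ) / 2) ≤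
      2 * (‖gradient f θ - v‖ ^ ((3 : ℝ) / 2) +
        M ^ (-(3 : ℝ) / 2) * ‖fderiv ℝ (gradient f) θ - U‖ ^ 3 +
        ‖gm‖ ^ ((3 : ℝ) / 2) + M ^ ((3 : ℝ) / 2) * ‖h‖ ^ 3) := by
  have hG : Differentiable ℝ (gradient f) :=
    (contDiff_gradient (m := 1) hf one_add_one_eq_two.le).differentiable one_ne_zero
  rw [hgm]
  exact gradient_norm_pow_bound_at_updated_point_general (starConvex_univ θ)
    (fun x _ ↦ (hG x).hasFDerivAt.hasFDerivWithinAt) (fun x _ ↦ hLip x θ) (Set.mem_univ _)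
    (by linarith) hM v U
end

section
/- Cubic-regularized ascent inequality with inexact derivatives: let θ, h, v ∈ E, let U : E → E be a continuous linear map, set M = 4ρ and define the model value m(h) = ⟨v, h⟩ + (1/2)·⟨U h, h⟩ − (M/6)·‖h‖³. Then f(θ + h) ≥ f(θ) + m(h) − (6/(5·√ρ))·‖∇f(θ) − v‖^{3/2} − (10/ρ²)·‖∇²f(θ) − U‖³ + (ρ/4)·‖h‖³. -/
open scoped RealInnerProductSpace

/-!
Along the segment from `θ` to `θ + h`, integrating the Lipschitz bound on the Hessian twice gives
`f (θ + h) ≥ f θ + ⟪∇f θ, h⟫ + ½ ⟪∇²f θ h, h⟫ - (ρ / 6) ‖h‖³`. Replacing `∇f θ` by `v` and `∇²f θ`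
by `U` costs at most `‖∇f θ - v‖ ‖h‖ + ½ ‖∇²f θ - U‖ ‖h‖²`, and Young's inequality trades each of
these two terms for the stated error term plus `(ρ / 8) ‖h‖³`. The cubic terms sum to
`ρ / 6 + ρ / 8 + ρ / 8 = 5 ρ / 12`, which is `M / 6 - ρ / 4` for `M = 4 ρ`.
-/

section Young

variable {a b k r x y ρ : ℝ}

theorem three_mul_sq_mul_le_two_mul_cube_add_cube (hx : 0 ≤ x) (hy : 0 ≤ y) :
    3 * (x ^ 2 * y) ≤ 2 * x ^ 3 + y ^ 3 := by
  have factored : 0 ≤ (x - y) ^ 2 * (2 * x + y) := by positivity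
  linarith

theorem mul_le_rpow_three_halves_add_cube (ha : 0 ≤ a) (hr : 0 ≤ r) (hk : 0 < k) :
    a * r ≤ 2 / (3 * k) * a ^ ((3 : ℝ) / 2) + k ^ 2 / 3 * r ^ 3 := by
  have young := three_mul_sq_mul_le_two_mul_cube_add_cube (Real.sqrt_nonneg a)
    (mul_nonneg hk.le hr)
  rw [Real.sq_sqrt ha] at young
  rw [Real.rpow_div_two_eq_sqrt 3 ha, Real.rpow_ofNat]
  calc a * r = 3 * (a * (k * r)) / (3 * k) := by field_simp
    _ ≤ (2 * √a ^ 3 + (k * r) ^ 3) / (3 * k) := by gcongr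
    _ = 2 / (3 * k) * √a ^ 3 + k ^ 2 / 3 * r ^ 3 := by field_simp

theorem mul_sq_le_cube_add_cube (hb : 0 ≤ b) (hr : 0 ≤ r) (hk : 0 < k) :
    b * r ^ 2 ≤ 1 / (3 * k ^ 2) * b ^ 3 + 2 * k / 3 * r ^ 3 := by
  have young := three_mul_sq_mul_le_two_mul_cube_add_cube (mul_nonneg hk.le hr) hb
  calc b * r ^ 2 = 3 * ((k * r) ^ 2 * b) / (3 * k ^ 2) := by field_simp
    _ ≤ (2 * (k * r) ^ 3 + b ^ 3) / (3 * k ^ 2) := by gcongr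
    _ = 1 / (3 * k ^ 2) * b ^ 3 + 2 * k / 3 * r ^ 3 := by field_simp; ring

theorem mul_le_inv_sqrt_mul_rpow_add_mul_cube (ha : 0 ≤ a) (hr : 0 ≤ r) (hρ : 0 < ρ) :
    a * r ≤ 6 / (5 * √ρ) * a ^ ((3 : ℝ) / 2) + ρ / 8 * r ^ 3 := by
  -- This weight makes the coefficient of `a ^ (3 / 2)` exactly `6 / (5 √ρ)`.
  have young := mul_le_rpow_three_halves_add_cube ha hr (k := 5 / 9 * √ρ) (by positivity)
  calc a * r ≤ 2 / (3 * (5 / 9 * √ρ)) * a ^ ((3 : ℝ) / 2) + (5 / 9 * √ρ) ^ 2 / 3 * r ^ 3 := young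
    _ = 6 / (5 * √ρ) * a ^ ((3 : ℝ) / 2) + 25 / 243 * ρ * r ^ 3 := by
      rw [mul_pow, Real.sq_sqrt hρ.le]
      field_simp
      ring
    _ ≤ 6 / (5 * √ρ) * a ^ ((3 : ℝ) / 2) + ρ / 8 * r ^ 3 := by
      gcongr
      linarith

theorem half_mul_sq_le_inv_sq_mul_cube_add_mul_cube (hb : 0 ≤ b) (hr : 0 ≤ r) (hρ : 0 < ρ) :
    1 / 2 * (b * r ^ 2) ≤ 10 / ρ ^ 2 * b ^ 3 + ρ / 8 * r ^ 3 := by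
  -- This weight makes the coefficient of `r ^ 3` exactly `ρ / 8`.
  have young := mul_sq_le_cube_add_cube hb hr (k := 3 / 8 * ρ) (by positivity)
  calc 1 / 2 * (b * r ^ 2)
      ≤ 1 / 2 * (1 / (3 * (3 / 8 * ρ) ^ 2) * b ^ 3 + 2 * (3 / 8 * ρ) / 3 * r ^ 3) := by gcongr
    _ = 32 / 27 / ρ ^ 2 * b ^ 3 + ρ / 8 * r ^ 3 := by field_simp; ring
    _ ≤ 10 / ρ ^ 2 * b ^ 3 + ρ / 8 * r ^ 3 := by gcongr; norm_num

end Young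

section Taylor

open Set

theorem norm_sub_le_of_norm_hasDerivWithinAt_le_mul_pow {F : Type*} [NormedAddCommGroup F]
    [NormedSpace ℝ F] {u u' : ℝ → F} {C : ℝ} {n : ℕ}
    (hu : ∀ t ∈ Icc (0 : ℝ) 1, HasDerivWithinAt u (u' t) (Icc 0 1) t)
    (bound : ∀ t ∈ Icc (0 : ℝ) 1, ‖u' t‖ ≤ C * t ^ n) :
    ‖u 1 - u 0‖ ≤ C / (n + 1) := by
  have hright : ∀ t ∈ Ico (0 : ℝ) 1, HasDerivWithinAt (fun t ↦ u t - u 0) (u' t) (Ici t) t :=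
    fun t ht ↦ ((hu t (Ico_subset_Icc_self ht)).mono_of_mem_nhdsWithin
      (Icc_mem_nhdsGE_of_mem ht)).sub_const _
  have hprimitive (t : ℝ) : HasDerivAt (fun t ↦ C / (n + 1) * t ^ (n + 1)) (C * t ^ n) t := by
    refine ((hasDerivAt_pow (n + 1) t).const_mul (C / (n + 1))).congr_deriv ?_
    push_cast
    field_simp
  have hle := image_norm_le_of_norm_deriv_right_le_deriv_boundary
    (fun t ht ↦ ((hu t ht).continuousWithinAt.sub continuousWithinAt_const)) hright (by simp)
    hprimitive (fun t ht ↦ bound t (Ico_subset_Icc_self ht)) (right_mem_Icc.2 zero_le_one)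
  simpa using hle

section Normed

variable {E F : Type*} [NormedAddCommGroup E] [NormedSpace ℝ E] [NormedAddCommGroup F]
  [NormedSpace ℝ F] {s : Set E} {g : E → F} {H : E → E →L[ℝ] F} {θ h : E} {ρ : ℝ}

theorem hasDerivWithinAt_comp_add_smul {g' : E →L[ℝ] F} {t : ℝ} (hs : StarConvex ℝ θ s)
    (hh : θ + h ∈ s) (hg : HasFDerivWithinAt g g' s (θ + t • h)) :
    HasDerivWithinAt (fun t : ℝ ↦ g (θ + t • h)) (g' h) (Icc 0 1) t := by
  have hline : HasDerivWithinAt (fun t : ℝ ↦ θ + t • h) h (Icc 0 1) t := by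
    simpa using (((hasDerivAt_id t).smul_const h).const_add θ).hasDerivWithinAt
  exact hg.comp_hasDerivWithinAt t hline fun τ hτ ↦ hs.add_smul_mem hh hτ.1 hτ.2

theorem norm_sub_sub_le_of_lipschitz_fderiv (hs : StarConvex ℝ θ s)
    (hg : ∀ x ∈ s, HasFDerivWithinAt g (H x) s x)
    (hLip : ∀ x ∈ s, ‖H x - H θ‖ ≤ ρ * ‖x - θ‖) (hh : θ + h ∈ s) :
    ‖g (θ + h) - g θ - H θ h‖ ≤ ρ / 2 * ‖h‖ ^ 2 := by
  have mem (t : ℝ) (ht : t ∈ Icc (0 : ℝ) 1) : θ + t • h ∈ s := hs.add_smul_mem hh ht.1 ht.2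
  have hderiv : ∀ t ∈ Icc (0 : ℝ) 1, HasDerivWithinAt (fun t : ℝ ↦ g (θ + t • h) - t • H θ h)
      (H (θ + t • h) h - H θ h) (Icc 0 1) t := fun t ht ↦ by
    simpa using (hasDerivWithinAt_comp_add_smul hs hh (hg _ (mem t ht))).fun_sub
      ((hasDerivWithinAt_id t _).smul_const (H θ h))
  have hbound : ∀ t ∈ Icc (0 : ℝ) 1,
      ‖H (θ + t • h) h - H θ h‖ ≤ ρ * ‖h‖ ^ 2 * t ^ 1 := fun t ht ↦
    calc ‖H (θ + t • h) h - H θ h‖ = ‖(H (θ + t • h) - H θ) h‖ := rfl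
      _ ≤ ρ * ‖θ + t • h - θ‖ * ‖h‖ :=
        ContinuousLinearMap.le_of_opNorm_le _ (hLip _ (mem t ht)) h
      _ = ρ * ‖h‖ ^ 2 * t ^ 1 := by
        rw [add_sub_cancel_left, norm_smul, Real.norm_of_nonneg ht.1]
        ring
  calc ‖g (θ + h) - g θ - H θ h‖
      = ‖(g (θ + (1 : ℝ) • h) - (1 : ℝ) • H θ h) - (g (θ + (0 : ℝ) • h) - (0 : ℝ) • H θ h)‖ := by
        simp only [one_smul, zero_smul, add_zero, sub_zero, sub_right_comm]
    _ ≤ ρ * ‖h‖ ^ 2 / ((1 : ℕ) + 1) :=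
      norm_sub_le_of_norm_hasDerivWithinAt_le_mul_pow hderiv hbound
    _ = ρ / 2 * ‖h‖ ^ 2 := by push_cast; ring

end Normed

section Hilbert

variable {E : Type*} [NormedAddCommGroup E] [InnerProductSpace ℝ E]

theorem abs_inner_apply_self_le (A : E →L[ℝ] E) (x : E) : |⟪A x, x⟫| ≤ ‖A‖ * ‖x‖ ^ 2 :=
  calc |⟪A x, x⟫| ≤ ‖A x‖ * ‖x‖ := abs_real_inner_le_norm _ _
    _ ≤ ‖A‖ * ‖x‖ * ‖x‖ := by gcongr; exact A.le_opNorm x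
    _ = ‖A‖ * ‖x‖ ^ 2 := by ring

variable [CompleteSpace E]

theorem differentiable_gradient_of_contDiff_two {f : E → ℝ} (hf : ContDiff ℝ 2 f) :
    Differentiable ℝ (gradient f) :=
  (InnerProductSpace.toDual ℝ E).symm.toContinuousLinearEquiv.differentiable.comp
    ((hf.fderiv_right (m := 1) (by norm_num)).differentiable one_ne_zero)

variable {s : Set E} {f : E → ℝ} {g : E → E} {H : E → E →L[ℝ] E} {θ h : E} {ρ : ℝ}

theorem abs_sub_taylor_two_le_of_lipschitz_hessian (hs : StarConvex ℝ θ s)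
    (hf : ∀ x ∈ s, HasGradientWithinAt f (g x) s x)
    (hg : ∀ x ∈ s, HasFDerivWithinAt g (H x) s x)
    (hLip : ∀ x ∈ s, ‖H x - H θ‖ ≤ ρ * ‖x - θ‖) (hh : θ + h ∈ s) :
    |f (θ + h) - (f θ + ⟪g θ, h⟫ + 1 / 2 * ⟪H θ h, h⟫)| ≤ ρ / 6 * ‖h‖ ^ 3 := by
  have mem (t : ℝ) (ht : t ∈ Icc (0 : ℝ) 1) : θ + t • h ∈ s := hs.add_smul_mem hh ht.1 ht.2
  have hderiv : ∀ t ∈ Icc (0 : ℝ) 1, HasDerivWithinAt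
      (fun t : ℝ ↦ f (θ + t • h) - (t * ⟪g θ, h⟫ + t ^ 2 * (1 / 2 * ⟪H θ h, h⟫)))
      ⟪g (θ + t • h) - g θ - H θ (t • h), h⟫ (Icc 0 1) t := fun t ht ↦ by
    refine ((hasDerivWithinAt_comp_add_smul hs hh (hf _ (mem t ht)).hasFDerivWithinAt).sub
      (((hasDerivAt_id t).mul_const ⟪g θ, h⟫).add
        ((hasDerivAt_pow 2 t).mul_const (1 / 2 * ⟪H θ h, h⟫))).hasDerivWithinAt).congr_deriv ?_
    simp only [InnerProductSpace.toDual_apply_apply, inner_sub_left, map_smul,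
      real_inner_smul_left]
    push_cast
    ring
  have hbound : ∀ t ∈ Icc (0 : ℝ) 1,
      ‖⟪g (θ + t • h) - g θ - H θ (t • h), h⟫‖ ≤ ρ / 2 * ‖h‖ ^ 3 * t ^ 2 := fun t ht ↦
    calc ‖⟪g (θ + t • h) - g θ - H θ (t • h), h⟫‖
        ≤ ‖g (θ + t • h) - g θ - H θ (t • h)‖ * ‖h‖ := norm_inner_le_norm _ _
      _ ≤ ρ / 2 * ‖t • h‖ ^ 2 * ‖h‖ := by
        gcongr
        exact norm_sub_sub_le_of_lipschitz_fderiv hs hg hLip (mem t ht)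
      _ = ρ / 2 * ‖h‖ ^ 3 * t ^ 2 := by
        rw [norm_smul, Real.norm_of_nonneg ht.1]
        ring
  have hremainder := norm_sub_le_of_norm_hasDerivWithinAt_le_mul_pow hderiv hbound
  simp only [one_smul, zero_smul, add_zero] at hremainder
  rw [Real.norm_eq_abs] at hremainder
  convert hremainder using 1
  · congr 1
    ring
  · push_cast
    ring

end Hilbert

end Taylor

theorem cubic_regularized_ascent_inequality_general {E : Type*} [NormedAddCommGroup E]
    [InnerProductSpace ℝ E] [CompleteSpace E] {s : Set E} {f : E → ℝ} {g : E → E}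
    {H : E → E →L[ℝ] E} {θ h : E} {ρ : ℝ} (hρ : 0 < ρ) (hs : StarConvex ℝ θ s)
    (hf : ∀ x ∈ s, HasGradientWithinAt f (g x) s x)
    (hg : ∀ x ∈ s, HasFDerivWithinAt g (H x) s x)
    (hLip : ∀ x ∈ s, ‖H x - H θ‖ ≤ ρ * ‖x - θ‖) (hh : θ + h ∈ s) (v : E) (U : E →L[ℝ] E) :
    f θ + (⟪v, h⟫ + 1 / 2 * ⟪U h, h⟫ - 5 * ρ / 12 * ‖h‖ ^ 3)
        - 6 / (5 * √ρ) * ‖g θ - v‖ ^ ((3 : ℝ) / 2) - 10 / ρ ^ 2 * ‖H θ - U‖ ^ 3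
      ≤ f (θ + h) := by
  have taylor := (abs_le.1 (abs_sub_taylor_two_le_of_lipschitz_hessian hs hf hg hLip hh)).1
  have gradient_error : -(‖g θ - v‖ * ‖h‖) ≤ ⟪g θ, h⟫ - ⟪v, h⟫ := by
    rw [← inner_sub_left]
    exact (abs_le.1 (abs_real_inner_le_norm _ _)).1
  have hessian_error : -(‖H θ - U‖ * ‖h‖ ^ 2) ≤ ⟪H θ h, h⟫ - ⟪U h, h⟫ := by
    rw [← inner_sub_left]
    exact (abs_le.1 (abs_inner_apply_self_le (H θ - U) h)).1
  have gradient_young :=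
    mul_le_inv_sqrt_mul_rpow_add_mul_cube (norm_nonneg (g θ - v)) (norm_nonneg h) hρ
  have hessian_young :=
    half_mul_sq_le_inv_sq_mul_cube_add_mul_cube (norm_nonneg (H θ - U)) (norm_nonneg h) hρ
  linarith

/-- Cubic-regularized ascent inequality with inexact derivatives: with
`M = 4ρ` and `m(h) = ⟨v, h⟩ + (1/2)·⟨U h, h⟩ − (M/6)·‖h‖³`, one has
`f(θ + h) ≥ f(θ) + m(h) − (6/(5·√ρ))·‖∇f(θ) − v‖^{3/2} − (10/ρ²)·‖∇²f(θ) − U‖³ + (ρ/4)·‖h‖³`. -/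
theorem cubic_regularized_ascent_inequality
    (d : ℕ) (hd : 1 ≤ d)
    (f : EuclideanSpace ℝ (Fin d) → ℝ) (hf : ContDiff ℝ 2 f)
    (ρ : ℝ) (hρ : 0 < ρ)
    (hLip : ∀ x y : EuclideanSpace ℝ (Fin d),
      ‖fderiv ℝ (gradient f) x - fderiv ℝ (gradient f) y‖ ≤ ρ * ‖x - y‖)
    (θ h v : EuclideanSpace ℝ (Fin d))
    (U : EuclideanSpace ℝ (Fin d) →L[ℝ] EuclideanSpace ℝ (Fin d))
    (M : ℝ) (hM : M = 4 * ρ)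
    (m : EuclideanSpace ℝ (Fin d) → ℝ)
    (hm : ∀ h' : EuclideanSpace ℝ (Fin d),
      m h' = ⟪v, h'⟫ + (1 / 2) * ⟪U h', h'⟫ - (M / 6) * ‖h'‖ ^ 3) :
    f (θ + h) ≥ f θ + m h -
        (6 / (5 * Real.sqrt ρ)) * ‖gradient f θ - v‖ ^ ((3 : ℝ) / 2) -
        (10 / ρ ^ 2) * ‖fderiv ℝ (gradient f) θ - U‖ ^ 3 +
        (ρ / 4) * ‖h‖ ^ 3 := by
  have ascent := cubic_regularized_ascent_inequality_general hρ (starConvex_univ θ)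
    (fun x _ ↦ (hf.differentiable two_ne_zero x).hasGradientAt.hasFDerivAt.hasFDerivWithinAt)
    (fun x _ ↦ (differentiable_gradient_of_contDiff_two hf x).hasFDerivAt.hasFDerivWithinAt)
    (fun x _ ↦ hLip x θ) (Set.mem_univ (θ + h)) v U
  rw [hm, hM]
  linarith
end
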